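/- arXiv:2305.08062 — 3 statements merged into one kernel-verified Lean document; each statement's English description precedes it below -/
import Mathlib

section
/- (Unbiasedness of OffCEM.) Assume cluster common support (for all x, c: π(c|x) > 0 implies π₀(c|x) > 0) and local correctness (for all x and all a, b with φ(x,a) = φ(x,b): q(x,a) − q(x,b) = f̂(x,a) − f̂(x,b)). Then the expectation of the OffCEM estimator on a single logged sample equals the policy value: Σ_x p(x) Σ_a π₀(a|x) Σ_r p(r|x,a) · [ w(x, φ(x,a)) · (ρ(r) − f̂(x,a)) + f̂(x,π) ] = V(π). -/
open Finset

/-- The probability that a policy `pol` on a finite action set puts on the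
cluster `c` under the clustering `φ` (for a fixed context). -/
noncomputable def clusterProb {A C : Type*} [Fintype A] [DecidableEq C]
    (pol : A → ℝ) (φ : A → C) (c : C) : ℝ :=
  ∑ a ∈ univ.filter (fun a => φ a = c), pol a

/-- The cluster importance weight `w(x,c) = π(c|x) / π₀(c|x)` (for a fixed
context), with the convention `t / 0 = 0`. -/
noncomputable def clusterWeight {A C : Type*} [Fintype A] [DecidableEq C]
    (π₀ π : A → ℝ) (φ : A → C) (c : C) : ℝ :=
  clusterProb π φ c / clusterProb π₀ φ c

/-! Local correctness says that the residual `q - f̂` is constant on clusters. Cluster importance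
weighting is a change of measure from `π₀` to `π` for such functions, so within each context the
weighted residual averages to `∑ a, π a * (q a - f̂ a)`, which is exactly what the regression
baseline `∑ a, π a * f̂ a` misses. -/

theorem sum_mul_affine_of_sum_eq_one {ι K : Type*} [CommRing K] {s : Finset ι} {μ : ι → K}
    (hμ : ∑ i ∈ s, μ i = 1) (y : ι → K) (w b F : K) :
    ∑ i ∈ s, μ i * (w * (y i - b) + F) = w * (∑ i ∈ s, μ i * y i - b) + F :=
  calc ∑ i ∈ s, μ i * (w * (y i - b) + F)
      = ∑ i ∈ s, (w * (μ i * y i) + μ i * (F - w * b)) := sum_congr rfl fun i _ => by ring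
    _ = w * ∑ i ∈ s, μ i * y i + (∑ i ∈ s, μ i) * (F - w * b) := by
      rw [sum_add_distrib, ← mul_sum, ← sum_mul]
    _ = w * (∑ i ∈ s, μ i * y i - b) + F := by rw [hμ]; ring

section Cluster

variable {A C : Type*} [Fintype A] [DecidableEq C] {π₀ π : A → ℝ} {φ : A → C}

theorem clusterProb_nonneg (hπ : ∀ a, 0 ≤ π a) (c : C) : 0 ≤ clusterProb π φ c :=
  sum_nonneg fun a _ => hπ a

theorem sum_mul_comp_eq_sum_clusterProb_mul (π : A → ℝ) (φ : A → C) (g : C → ℝ) :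
    ∑ a, π a * g (φ a) = ∑ c ∈ univ.image φ, clusterProb π φ c * g c := by
  rw [← sum_fiberwise_of_maps_to fun a _ => mem_image_of_mem φ (mem_univ a)]
  refine sum_congr rfl fun c _ => ?_
  rw [clusterProb, sum_mul]
  exact sum_congr rfl fun a ha => by rw [(mem_filter.mp ha).2]

theorem clusterProb_mul_clusterWeight {c : C}
    (hc : clusterProb π₀ φ c = 0 → clusterProb π φ c = 0) :
    clusterProb π₀ φ c * clusterWeight π₀ π φ c = clusterProb π φ c :=
  mul_div_cancel_of_imp' hc

theorem sum_mul_clusterWeight_mul_comp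
    (hac : ∀ c, clusterProb π₀ φ c = 0 → clusterProb π φ c = 0) (g : C → ℝ) :
    ∑ a, π₀ a * (clusterWeight π₀ π φ (φ a) * g (φ a)) = ∑ a, π a * g (φ a) := by
  rw [sum_mul_comp_eq_sum_clusterProb_mul π₀ φ fun c => clusterWeight π₀ π φ c * g c,
    sum_mul_comp_eq_sum_clusterProb_mul π φ g]
  exact sum_congr rfl fun c _ => by rw [← mul_assoc, clusterProb_mul_clusterWeight (hac c)]

theorem sum_mul_clusterWeight_mul_of_factorsThrough
    (hac : ∀ c, clusterProb π₀ φ c = 0 → clusterProb π φ c = 0) {d : A → ℝ}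
    (hd : d.FactorsThrough φ) :
    ∑ a, π₀ a * (clusterWeight π₀ π φ (φ a) * d a) = ∑ a, π a * d a := by
  obtain ⟨g, rfl⟩ := (Function.factorsThrough_iff d).mp hd
  exact sum_mul_clusterWeight_mul_comp hac g

/-- Unbiasedness conditionally on the context, which is fixed; `hac` is cluster common support for
signed weights, stated as absolute continuity. -/
theorem offcem_unbiased_general {R : Type*} [Fintype R] (hπ₀sum : ∑ a, π₀ a = 1)
    {q fhat : A → ℝ} {ρ : R → ℝ} {pr : A → R → ℝ} (hprsum : ∀ a, ∑ r, pr a r = 1)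
    (hmean : ∀ a, ∑ r, pr a r * ρ r = q a)
    (hac : ∀ c, clusterProb π₀ φ c = 0 → clusterProb π φ c = 0)
    (hlc : ∀ a b, φ a = φ b → q a - q b = fhat a - fhat b) :
    ∑ a, π₀ a * ∑ r, pr a r *
        (clusterWeight π₀ π φ (φ a) * (ρ r - fhat a) + ∑ a', π a' * fhat a')
      = ∑ a, π a * q a := by
  have residual_factorsThrough : (fun a => q a - fhat a).FactorsThrough φ :=
    fun a b hab => sub_eq_sub_iff_sub_eq_sub.mp (hlc a b hab)
  calc ∑ a, π₀ a * ∑ r, pr a r *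
          (clusterWeight π₀ π φ (φ a) * (ρ r - fhat a) + ∑ a', π a' * fhat a')
      = ∑ a, π₀ a * (clusterWeight π₀ π φ (φ a) * (q a - fhat a) + ∑ a', π a' * fhat a') := by
        simp only [sum_mul_affine_of_sum_eq_one (hprsum _), hmean]
    _ = ∑ a, π₀ a * (clusterWeight π₀ π φ (φ a) * (q a - fhat a)) + ∑ a, π a * fhat a := by
        simp only [mul_add, sum_add_distrib, ← sum_mul, hπ₀sum, one_mul]
    _ = ∑ a, π a * (q a - fhat a) + ∑ a, π a * fhat a := by
        rw [sum_mul_clusterWeight_mul_of_factorsThrough hac residual_factorsThrough]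
    _ = ∑ a, π a * q a := by
        simp only [← sum_add_distrib, ← mul_add, sub_add_cancel]

end Cluster

/-- Unbiasedness of the OffCEM estimator under cluster common support and
local correctness: the expectation of the OffCEM estimator on a single logged
sample equals the policy value `V(π)`. -/
theorem offcem_unbiased
    {X A C R : Type*} [Fintype X] [Fintype A] [Fintype C] [Fintype R]
    [Nonempty X] [Nonempty A] [Nonempty C] [Nonempty R] [DecidableEq C]
    (p : X → ℝ) (hp : ∀ x, 0 ≤ p x) (hpsum : ∑ x, p x = 1)
    (π₀ π : X → A → ℝ)
    (hπ₀ : ∀ x a, 0 ≤ π₀ x a) (hπ₀sum : ∀ x, ∑ a, π₀ x a = 1)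
    (hπ : ∀ x a, 0 ≤ π x a) (hπsum : ∀ x, ∑ a, π x a = 1)
    (φ : X → A → C)
    (q fhat : X → A → ℝ)
    (ρ : R → ℝ) (pr : X → A → R → ℝ)
    (hpr : ∀ x a r, 0 ≤ pr x a r) (hprsum : ∀ x a, ∑ r, pr x a r = 1)
    (hmean : ∀ x a, ∑ r, pr x a r * ρ r = q x a)
    (hsupp : ∀ x (c : C),
      0 < clusterProb (π x) (φ x) c → 0 < clusterProb (π₀ x) (φ x) c)
    (hlc : ∀ x a b, φ x a = φ x b → q x a - q x b = fhat x a - fhat x b) :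
    ∑ x, p x * ∑ a, π₀ x a * ∑ r, pr x a r *
        (clusterWeight (π₀ x) (π x) (φ x) (φ x a) * (ρ r - fhat x a)
          + ∑ a', π x a' * fhat x a')
      = ∑ x, p x * ∑ a, π x a * q x a := by
  have clusterProb_eq_zero (x : X) (c : C) (h₀ : clusterProb (π₀ x) (φ x) c = 0) :
      clusterProb (π x) (φ x) c = 0 :=
    (clusterProb_nonneg (hπ x) c).eq_of_not_lt' fun hpos => (hsupp x c hpos).ne' h₀
  exact sum_congr rfl fun x _ => congrArg (p x * ·) <|
    offcem_unbiased_general (hπ₀sum x) (hprsum x) (hmean x) (clusterProb_eq_zero x) (hlc x)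
end

section
/- (Variance of the IPS estimator.) Assume common support: for all x, a, π(a|x) > 0 implies π₀(a|x) > 0, and let w(x,a) := π(a|x)/π₀(a|x) (convention t/0 = 0). Let Y(x,a,r) := w(x,a) · ρ(r), a real random variable under the joint distribution μ(x,a,r) := p(x)·π₀(a|x)·p(r|x,a). Then Var_μ[Y] = Σ_x p(x) Σ_a π₀(a|x) · w(x,a)² · σ²(x,a) + Σ_x p(x) · Var_{π₀(·|x)}[ a ↦ w(x,a) · q(x,a) ] + Var_p[ x ↦ Σ_a π(a|x) q(x,a) ]. -/
open Finset

/-- Variance of a real-valued function `Z` under a distribution `ν` on a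
finite type: `Var_ν[Z] = ∑ ω, ν ω * (Z ω - ∑ ω', ν ω' * Z ω')²`. -/
noncomputable def distVar {Ω : Type*} [Fintype Ω] (ν Z : Ω → ℝ) : ℝ :=
  ∑ ω, ν ω * (Z ω - ∑ ω', ν ω' * Z ω') ^ 2

/-!
Draw the context, then the action, then the reward, and apply the law of total variance twice:
conditioning on the context, and then on the action. Given `(x, a)` the weight `w(x, a)` is a
constant, so the innermost variance is `w(x, a)² σ²(x, a)`. Common support gives `π₀ w = π`, which
turns the conditional mean given `x` into the value of the target policy at `x`.
-/

section TotalVariance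

variable {Ω α β γ : Type*} [Fintype Ω] [Fintype α] [Fintype β] [Fintype γ]

theorem sum_mul_sub_sq_eq_distVar_add {ν : Ω → ℝ} (hν : ∑ ω, ν ω = 1) (Z : Ω → ℝ) (c : ℝ) :
    ∑ ω, ν ω * (Z ω - c) ^ 2 = distVar ν Z + (∑ ω, ν ω * Z ω - c) ^ 2 := by
  unfold distVar
  set m := ∑ ω, ν ω * Z ω with hm
  have expand_around_mean (ω : Ω) : ν ω * (Z ω - c) ^ 2 =
      ν ω * (Z ω - m) ^ 2 + 2 * (m - c) * (ν ω * Z ω - m * ν ω) + (m - c) ^ 2 * ν ω := by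
    ring
  have centered : ∑ ω, (ν ω * Z ω - m * ν ω) = 0 := by
    rw [sum_sub_distrib, ← mul_sum, hν, ← hm, mul_one, sub_self]
  simp only [expand_around_mean, sum_add_distrib, ← mul_sum, centered, hν, mul_zero, add_zero,
    mul_one]

theorem distVar_const_mul (ν : Ω → ℝ) (c : ℝ) (Z : Ω → ℝ) :
    distVar ν (fun ω => c * Z ω) = c ^ 2 * distVar ν Z := by
  simp only [distVar, mul_left_comm _ c, ← mul_sum, ← mul_sub, mul_pow, mul_left_comm _ (c ^ 2)]

/-- The joint distribution of a pair whose first component has distribution `p` and whose second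
component has conditional distribution `κ a` given that the first is `a`: the analogue of
`MeasureTheory.Measure.compProd` for distributions given as real-valued functions. -/
def distCompProd (p : α → ℝ) (κ : α → β → ℝ) : α × β → ℝ :=
  fun z => p z.1 * κ z.1 z.2

theorem sum_distCompProd_mul (p : α → ℝ) (κ : α → β → ℝ) (Z : α × β → ℝ) :
    ∑ z, distCompProd p κ z * Z z = ∑ a, p a * ∑ b, κ a b * Z (a, b) := by
  simp only [distCompProd, Fintype.sum_prod_type, mul_assoc, mul_sum]

theorem sum_distCompProd {κ : α → β → ℝ} (hκ : ∀ a, ∑ b, κ a b = 1) (p : α → ℝ) :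
    ∑ z, distCompProd p κ z = ∑ a, p a := by
  simpa [hκ] using sum_distCompProd_mul p κ 1

theorem distVar_distCompProd {κ : α → β → ℝ} (hκ : ∀ a, ∑ b, κ a b = 1) (p : α → ℝ)
    (Z : α × β → ℝ) :
    distVar (distCompProd p κ) Z =
      ∑ a, p a * distVar (κ a) (fun b => Z (a, b)) +
        distVar p (fun a => ∑ b, κ a b * Z (a, b)) := by
  rw [distVar, sum_distCompProd_mul p κ Z, sum_distCompProd_mul p κ fun z => (Z z - _) ^ 2]
  simp only [sum_mul_sub_sq_eq_distVar_add (hκ _), mul_add, sum_add_distrib]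
  rfl

theorem distVar_distCompProd_distCompProd {κ : α → β → ℝ} (hκ : ∀ a, ∑ b, κ a b = 1)
    {η : α → β → γ → ℝ} (hη : ∀ a b, ∑ c, η a b c = 1) (p : α → ℝ) (Z : α × β × γ → ℝ) :
    distVar (distCompProd p fun a => distCompProd (κ a) (η a)) Z =
      ∑ a, p a * ∑ b, κ a b * distVar (η a b) (fun c => Z (a, b, c)) +
        ∑ a, p a * distVar (κ a) (fun b => ∑ c, η a b c * Z (a, b, c)) +
        distVar p (fun a => ∑ b, κ a b * ∑ c, η a b c * Z (a, b, c)) := by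
  have hκη (a : α) : ∑ z, distCompProd (κ a) (η a) z = 1 := by
    rw [sum_distCompProd (hη a), hκ]
  simp only [distVar_distCompProd hκη, distVar_distCompProd (hη _), sum_distCompProd_mul, mul_add,
    sum_add_distrib]

end TotalVariance

/-- Variance of the IPS estimator: under common support, with the vanilla importance weight `w(x,a) = π(a|x)/π₀(a|x)` (convention `t/0 = 0`), the
variance of the per-sample IPS random variable `Y(x,a,r) = w(x,a)·ρ(r)`
decomposes into the three stated terms. -/
theorem ips_variance
    {X A R : Type*} [Fintype X] [Fintype A] [Fintype R]
    [Nonempty X] [Nonempty A] [Nonempty R]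
    (p : X → ℝ) (hp : ∀ x, 0 ≤ p x) (hpsum : ∑ x, p x = 1)
    (π₀ π : X → A → ℝ)
    (hπ₀ : ∀ x a, 0 ≤ π₀ x a) (hπ₀sum : ∀ x, ∑ a, π₀ x a = 1)
    (hπ : ∀ x a, 0 ≤ π x a) (hπsum : ∀ x, ∑ a, π x a = 1)
    (q : X → A → ℝ)
    (ρ : R → ℝ) (pr : X → A → R → ℝ)
    (hpr : ∀ x a r, 0 ≤ pr x a r) (hprsum : ∀ x a, ∑ r, pr x a r = 1)
    (hmean : ∀ x a, ∑ r, pr x a r * ρ r = q x a)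
    (hsupp : ∀ x a, 0 < π x a → 0 < π₀ x a) :
    distVar (fun z : X × A × R => p z.1 * π₀ z.1 z.2.1 * pr z.1 z.2.1 z.2.2)
        (fun z : X × A × R => (π z.1 z.2.1 / π₀ z.1 z.2.1) * ρ z.2.2)
      = (∑ x, p x * ∑ a, π₀ x a * (π x a / π₀ x a) ^ 2 *
            (∑ r, pr x a r * (ρ r - q x a) ^ 2))
        + (∑ x, p x * distVar (π₀ x)
            (fun a => (π x a / π₀ x a) * q x a))
        + distVar p (fun x => ∑ a, π x a * q x a) := by
  have reweight (x : X) (a : A) : π₀ x a * (π x a / π₀ x a) = π x a :=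
    mul_div_cancel_of_imp' fun h₀ =>
      ((hπ x a).eq_or_lt.resolve_right fun hpos => (hsupp x a hpos).ne' h₀).symm
  have joint_eq : (fun z : X × A × R => p z.1 * π₀ z.1 z.2.1 * pr z.1 z.2.1 z.2.2) =
      distCompProd p fun x => distCompProd (π₀ x) (pr x) :=
    funext fun _ => mul_assoc _ _ _
  have reward_mean (x : X) (a : A) :
      ∑ r, pr x a r * (π x a / π₀ x a * ρ r) = π x a / π₀ x a * q x a := by
    simp only [mul_left_comm (pr x a _), ← mul_sum, hmean]
  have reward_var (x : X) (a : A) :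
      distVar (pr x a) ρ = ∑ r, pr x a r * (ρ r - q x a) ^ 2 := by
    rw [distVar, hmean]
  rw [joint_eq, distVar_distCompProd_distCompProd hπ₀sum hprsum]
  simp only [distVar_const_mul, reward_mean, reward_var]
  simp only [← mul_assoc, reweight]
end

section
/- (Intermediate covariance form of the OffCEM bias.) Assume common support: for all x, a, π(a|x) > 0 implies π₀(a|x) > 0, and let w(x,a) := π(a|x)/π₀(a|x) (convention t/0 = 0). Let E := Σ_x p(x) Σ_a π₀(a|x) [ w(x, φ(x,a)) · (q(x,a) − f̂(x,a)) + f̂(x,π) ] be the expectation of the OffCEM estimator on a single logged sample, and write Δ(x,a) := q(x,a) − f̂(x,a). Then E − V(π) = Σ_x p(x) Σ_c π₀(c|x) Σ_a π₀(a|x,c) · w(x,a) · ( (Σ_b π₀(b|x,c) Δ(x,b)) − Δ(x,a) ). -/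
open Finset

/-- Within-cluster conditional probability
`pol(a | c) = pol(a) · 𝟙{φ(a) = c} / pol(c)`, with the convention `t / 0 = 0`. -/
noncomputable def condProb {A C : Type*} [Fintype A] [DecidableEq C]
    (pol : A → ℝ) (φ : A → C) (a : A) (c : C) : ℝ :=
  pol a * (if φ a = c then (1 : ℝ) else 0) / clusterProb pol φ c

/-!
Within a fixed context, the tower rule for `π₀` over clusters followed by the change of measure
`π₀(a) · (π(a) / π₀(a)) = π(a)` turns the right-hand side into
`∑ a, π(a) · (𝔼[Δ | φ a] - Δ(a))`, where the conditional expectation is taken under `π₀`.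
Averaging `𝔼[Δ | φ a]` over `π` is the same as averaging `Δ` over `π₀` with the cluster importance
weights. The result is the left-hand side, because `f̂(π) - V(π) = -∑ a, π(a) · Δ(a)`.
-/

section FixedContext

variable {A C : Type*} [Fintype A] [DecidableEq C]

lemma eq_zero_of_clusterProb_eq_zero {pol : A → ℝ} (hpol : ∀ a, 0 ≤ pol a) {φ : A → C} {a : A}
    (h : clusterProb pol φ (φ a) = 0) : pol a = 0 :=
  (sum_eq_zero_iff_of_nonneg fun b _ => hpol b).1 h a (by simp)

lemma clusterProb_mul_condProb {pol : A → ℝ} (hpol : ∀ a, 0 ≤ pol a) (φ : A → C) (a : A)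
    (c : C) : clusterProb pol φ c * condProb pol φ a c = if c = φ a then pol a else 0 := by
  split_ifs with hc
  · subst hc
    simpa [condProb] using mul_div_cancel_of_imp' (eq_zero_of_clusterProb_eq_zero hpol (φ := φ))
  · simp [condProb, Ne.symm hc]

lemma sum_clusterProb_mul_sum_condProb_mul [Fintype C] {pol : A → ℝ} (hpol : ∀ a, 0 ≤ pol a)
    (φ : A → C) (g : A → C → ℝ) :
    ∑ c, clusterProb pol φ c * ∑ a, condProb pol φ a c * g a c = ∑ a, pol a * g a (φ a) := by
  simp_rw [mul_sum, ← mul_assoc, clusterProb_mul_condProb hpol]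
  rw [sum_comm]
  simp

lemma sum_clusterProb_mul_sum_condProb_mul_div_mul [Fintype C] {π₀ π : A → ℝ}
    (hπ₀ : ∀ a, 0 ≤ π₀ a) (hsupp : ∀ a, π₀ a = 0 → π a = 0) (φ : A → C) (g : A → C → ℝ) :
    ∑ c, clusterProb π₀ φ c * ∑ a, condProb π₀ φ a c * (π a / π₀ a) * g a c
      = ∑ a, π a * g a (φ a) := by
  simp_rw [mul_assoc (condProb _ _ _ _)]
  rw [sum_clusterProb_mul_sum_condProb_mul hπ₀ φ fun a c => π a / π₀ a * g a c]
  simp_rw [← mul_assoc, mul_div_cancel_of_imp' (hsupp _)]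

lemma sum_mul_condProb_apply (π₀ π : A → ℝ) (φ : A → C) (b : A) :
    ∑ a, π a * condProb π₀ φ b (φ a) = π₀ b * clusterWeight π₀ π φ (φ b) := by
  rw [clusterWeight, clusterProb, sum_filter, sum_div, mul_sum]
  refine sum_congr rfl fun a _ => ?_
  by_cases h : φ a = φ b
  · simp only [condProb, h, if_true]
    ring
  · simp [condProb, h, Ne.symm h]

lemma sum_mul_sum_condProb_mul (π₀ π : A → ℝ) (φ : A → C) (h : A → ℝ) :
    ∑ a, π a * ∑ b, condProb π₀ φ b (φ a) * h b
      = ∑ b, π₀ b * (clusterWeight π₀ π φ (φ b) * h b) := by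
  simp_rw [mul_sum, ← mul_assoc]
  rw [sum_comm]
  simp_rw [← sum_mul, sum_mul_condProb_apply]

lemma offcem_bias_eq_sum_sub_sum {π₀ : A → ℝ} (hπ₀sum : ∑ a, π₀ a = 1) (π : A → ℝ)
    (φ : A → C) (q fhat : A → ℝ) :
    (∑ a, π₀ a * (clusterWeight π₀ π φ (φ a) * (q a - fhat a) + ∑ a', π a' * fhat a'))
        - ∑ a, π a * q a
      = ∑ a, π₀ a * (clusterWeight π₀ π φ (φ a) * (q a - fhat a))
        - ∑ a, π a * (q a - fhat a) := by
  have model_average : ∑ a, π₀ a * ∑ a', π a' * fhat a' = ∑ a', π a' * fhat a' := by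
    rw [← sum_mul, hπ₀sum, one_mul]
  have residual_average :
      ∑ a, π a * (q a - fhat a) = ∑ a, π a * q a - ∑ a, π a * fhat a := by
    simp_rw [mul_sub, sum_sub_distrib]
  simp_rw [mul_add, sum_add_distrib]
  rw [model_average, residual_average]
  ring

lemma offcem_bias_covariance_form_at_context [Fintype C] {π₀ π : A → ℝ} (hπ₀ : ∀ a, 0 ≤ π₀ a)
    (hπ₀sum : ∑ a, π₀ a = 1) (hsupp : ∀ a, π₀ a = 0 → π a = 0) (φ : A → C)
    (q fhat : A → ℝ) :
    (∑ a, π₀ a * (clusterWeight π₀ π φ (φ a) * (q a - fhat a) + ∑ a', π a' * fhat a'))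
        - ∑ a, π a * q a
      = ∑ c, clusterProb π₀ φ c * ∑ a, condProb π₀ φ a c * (π a / π₀ a) *
          ((∑ b, condProb π₀ φ b c * (q b - fhat b)) - (q a - fhat a)) := by
  rw [offcem_bias_eq_sum_sub_sum hπ₀sum, ← sum_mul_sum_condProb_mul, ← sum_sub_distrib,
    sum_clusterProb_mul_sum_condProb_mul_div_mul hπ₀ hsupp φ fun a c =>
      (∑ b, condProb π₀ φ b c * (q b - fhat b)) - (q a - fhat a)]
  simp_rw [mul_sub]

end FixedContext

/-- Intermediate covariance form of the OffCEM bias: under common support,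
writing `Δ(x,a) = q(x,a) - f̂(x,a)`, the gap between the expectation `E` of
the OffCEM estimator on a single logged sample and the policy value `V(π)`
equals
`∑ x, p x * ∑ c, π₀(c|x) * ∑ a, π₀(a|x,c) · w(x,a) ·
  ((∑ b, π₀(b|x,c) Δ(x,b)) - Δ(x,a))`. -/
theorem offcem_bias_covariance_form
    {X A C : Type*} [Fintype X] [Fintype A] [Fintype C]
    [Nonempty X] [Nonempty A] [Nonempty C] [DecidableEq C]
    (p : X → ℝ) (hp : ∀ x, 0 ≤ p x) (hpsum : ∑ x, p x = 1)
    (π₀ π : X → A → ℝ)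
    (hπ₀ : ∀ x a, 0 ≤ π₀ x a) (hπ₀sum : ∀ x, ∑ a, π₀ x a = 1)
    (hπ : ∀ x a, 0 ≤ π x a) (hπsum : ∀ x, ∑ a, π x a = 1)
    (φ : X → A → C)
    (q fhat : X → A → ℝ)
    (hsupp : ∀ x a, 0 < π x a → 0 < π₀ x a) :
    (∑ x, p x * ∑ a, π₀ x a *
        (clusterWeight (π₀ x) (π x) (φ x) (φ x a) * (q x a - fhat x a)
          + ∑ a', π x a' * fhat x a'))
      - (∑ x, p x * ∑ a, π x a * q x a)
      = ∑ x, p x * ∑ c, clusterProb (π₀ x) (φ x) c *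
          ∑ a, condProb (π₀ x) (φ x) a c * (π x a / π₀ x a) *
            ((∑ b, condProb (π₀ x) (φ x) b c * (q x b - fhat x b))
              - (q x a - fhat x a)) := by
  rw [← sum_sub_distrib]
  refine sum_congr rfl fun x _ => ?_
  have absolutely_continuous (a : A) (ha : π₀ x a = 0) : π x a = 0 := by
    by_contra hne
    exact (hsupp x a ((hπ x a).lt_of_ne' hne)).ne' ha
  rw [← mul_sub, offcem_bias_covariance_form_at_context (hπ₀ x) (hπ₀sum x) absolutely_continuous]
end
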